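/- Let k_1 > k_2 > ⋯ > k_s be integers (s ≥ 1) such that k_j − k_{j+1} ≥ 2 for all 1 ≤ j ≤ s−1. If k_1 is odd, then (−1)^{k_1} φ^{k_1} + (−1)^{k_2} φ^{k_2} + ⋯ + (−1)^{k_s} φ^{k_s} < 0. -/

import Mathlib

/-!
Each term is at most `φ ^ (k j)` and the exponents drop by at least `2`, so the identity
`φ ^ m + φ ^ (m - 1) = φ ^ (m + 1)` gives by induction that such a sum with all exponents `≤ m`
is `< φ ^ (m + 1)` (`sum_lt_goldenPhi_zpow`). When `k 0` is odd its term is `-φ ^ (k 0)`, and the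
remaining terms, with exponents `≤ k 0 - 2`, add up to less than `φ ^ (k 0 - 1) < φ ^ (k 0)`.
-/

/-- The golden ratio φ = (1+√5)/2. -/
noncomputable def goldenPhi : ℝ := (1 + Real.sqrt 5) / 2

lemma one_lt_goldenPhi : 1 < goldenPhi := Real.one_lt_goldenRatio

lemma goldenPhi_zpow_add (m : ℤ) :
    goldenPhi ^ m + goldenPhi ^ (m - 1) = goldenPhi ^ (m + 1) := by
  have h0 : goldenPhi ≠ 0 := (zero_lt_one.trans one_lt_goldenPhi).ne'
  have hsq : goldenPhi ^ 2 = goldenPhi + 1 := Real.goldenRatio_sq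
  rw [zpow_add_one₀ h0, zpow_sub_one₀ h0]
  field_simp
  linarith

/-- The hypothesis `0 < s → k 0 ≤ m` lets the empty sum serve as the base case. -/
lemma sum_lt_goldenPhi_zpow (s : ℕ) : ∀ (k : ℕ → ℤ) (m : ℤ),
    (∀ j, j + 1 < s → k j - k (j + 1) ≥ 2) → (0 < s → k 0 ≤ m) →
    ∑ j ∈ Finset.range s, (-1 : ℝ) ^ (k j) * goldenPhi ^ (k j) < goldenPhi ^ (m + 1) := by
  have hpos : 0 < goldenPhi := zero_lt_one.trans one_lt_goldenPhi
  induction s with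
  | zero => intro k m _ _; simpa using zpow_pos hpos (m + 1)
  | succ s ih =>
    intro k m hgap hm
    rw [Finset.sum_range_succ']
    have htail := ih (fun j => k (j + 1)) (k 0 - 2) (fun j hj => hgap (j + 1) (by omega))
      (fun hs => by have := hgap 0 (by omega); simp only [zero_add] at this ⊢; omega)
    rw [show k 0 - 2 + 1 = k 0 - 1 by ring] at htail
    have hhead : (-1 : ℝ) ^ (k 0) * goldenPhi ^ (k 0) ≤ goldenPhi ^ (k 0) := by
      have hp := zpow_pos hpos (k 0)
      rcases Int.even_or_odd (k 0) with h | h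
      · rw [h.neg_one_zpow, one_mul]
      · rw [h.neg_one_zpow]; linarith
    have hmono : goldenPhi ^ (k 0 + 1) ≤ goldenPhi ^ (m + 1) :=
      zpow_le_zpow_right₀ one_lt_goldenPhi.le (by have := hm (by omega); omega)
    have := goldenPhi_zpow_add (k 0)
    linarith

/-- Lemma 2 (odd case): for integers `k 0 > k 1 > ⋯ > k (s-1)` with consecutive
gaps at least 2 and `k 0` odd, `(−1)^{k_1} φ^{k_1} + ⋯ + (−1)^{k_s} φ^{k_s} < 0`. -/
theorem stmt_10 (s : ℕ) (hs : 1 ≤ s) (k : ℕ → ℤ)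
    (hgap : ∀ j, j + 1 < s → k j - k (j + 1) ≥ 2)
    (hodd : Odd (k 0)) :
    ∑ j ∈ Finset.range s, (-1 : ℝ) ^ (k j) * goldenPhi ^ (k j) < 0 := by
  obtain ⟨s, rfl⟩ := Nat.exists_eq_add_of_le' hs
  rw [Finset.sum_range_succ', hodd.neg_one_zpow]
  have htail := sum_lt_goldenPhi_zpow s (fun j => k (j + 1)) (k 0 - 2)
    (fun j hj => hgap (j + 1) (by omega))
    (fun hs => by have := hgap 0 (by omega); simp only [zero_add] at this ⊢; omega)
  have hlt : goldenPhi ^ (k 0 - 2 + 1) < goldenPhi ^ (k 0) :=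
    zpow_lt_zpow_right₀ one_lt_goldenPhi (by omega)
  linarith
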